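/- arXiv:1506.00034 — 2 statements merged into one kernel-verified Lean document; each statement's English description precedes it below -/
import Mathlib

section
/- For every integer d ≥ 1 there exist positive constants c_d and ε_{0,d} such that for every R > 0 and every 0 < ε ≤ ε_{0,d} R, the family K^{d+1}(R) of all closed convex subsets of the closed Euclidean ball of radius R centered at 0 in ℝ^{d+1} admits an ε-cover in the Hausdorff distance of cardinality at most exp( c_d (R/ε)^{d/2} ); that is, there exist sets V_1,…,V_N ⊆ ℝ^{d+1} with N ≤ exp(c_d (R/ε)^{d/2}) such that every K ∈ K^{d+1}(R) satisfies d_H(K, V_i) ≤ ε for some i. -/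
open MeasureTheory Real

/-- The ε-bracketing number of a class `F` of real-valued functions, where brackets are
required to hold pointwise on `dom` and their size is measured by `size`. It is `⊤`
if no finite collection of brackets covers `F`. -/
noncomputable def bracketN {α : Type*} (ε : ℝ) (F : Set (α → ℝ)) (dom : Set α)
    (size : (α → ℝ) → ℝ) : ℕ∞ :=
  sInf {N : ℕ∞ | ∃ n : ℕ, (n : ℕ∞) = N ∧ ∃ l u : Fin n → α → ℝ,
    (∀ i, size (fun x => u i x - l i x) ≤ ε) ∧
    ∀ f ∈ F, ∃ i, ∀ x ∈ dom, l i x ≤ f x ∧ f x ≤ u i x}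

/-- The `L_p` size of a function over a domain `dom`, w.r.t. Lebesgue measure. -/
noncomputable def LpSize {d : ℕ} (p : ℝ) (dom : Set (EuclideanSpace ℝ (Fin d)))
    (g : EuclideanSpace ℝ (Fin d) → ℝ) : ℝ :=
  (∫ x in dom, |g x| ^ p) ^ (1 / p)

/-- The sup (`L_∞`) size of a function over a domain `dom`. -/
noncomputable def LinfSize {α : Type*} (dom : Set α) (g : α → ℝ) : ℝ :=
  sSup ((fun x => |g x|) '' dom)

/-- The class `C(D, B)` of convex functions on `D` bounded in absolute value by `B`. -/
def convexClass {d : ℕ} (D : Set (EuclideanSpace ℝ (Fin d))) (B : ℝ) :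
    Set (EuclideanSpace ℝ (Fin d) → ℝ) :=
  {f | ConvexOn ℝ D f ∧ ∀ x ∈ D, |f x| ≤ B}

/-- The class `C(D, B, Γ)` of convex functions on `D` bounded in absolute value by `B` and
with Lipschitz constant `Γ i` in the `i`-th coordinate direction. -/
def convexLipClass {d : ℕ} (D : Set (EuclideanSpace ℝ (Fin d))) (B : ℝ) (Γ : Fin d → ℝ) :
    Set (EuclideanSpace ℝ (Fin d) → ℝ) :=
  {f | ConvexOn ℝ D f ∧ (∀ x ∈ D, |f x| ≤ B) ∧
    ∀ i : Fin d, ∀ x ∈ D, ∀ l : ℝ, x + l • (EuclideanSpace.single i (1:ℝ)) ∈ D →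
      |f (x + l • EuclideanSpace.single i (1:ℝ)) - f x| ≤ Γ i * |l|}

/-!
The function `infDist · K` of a convex body `K` is convex, and at distance at least `r` from `K` it
lies below its tangents up to a quadratic error with constant `1 / (2 * r)`. So if the distance
functions of `K` and `L` differ by at most `η` on a net of mesh `h`, they differ by at most
`η + h ^ 2 / (2 * r)` at every point that is a convex combination of nearby net points. Agreement
up to an error on a surface around both bodies bounds their Hausdorff distance by that error. Hence
bodies are distinguished at scale `δ` by their distances to a net of mesh proportional to `√δ` on
the `d`-dimensional boundary of a cube, which takes about `δ ^ (-d / 2)` points.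

Rounding all distances at once would cost a factor `log (1 / δ)` in the exponent. Instead the scale
is divided by `4` repeatedly: inside a Hausdorff ball of radius `δ` the distance at each net point
is already known up to `δ`, so boundedly many values per point suffice to reach scale `δ / 4`, and
since `1 ≤ d` the net sizes over all scales sum geometrically.
-/

open Metric Set
open scoped NNReal

section CoveringNumbers

variable {X Y : Type*} [PseudoEMetricSpace X] [PseudoEMetricSpace Y] {A : Set X} {ε δ η : ℝ≥0}

theorem coveringNumber_le_natCast_iff {n : ℕ} :
    coveringNumber ε A ≤ n ↔ ∃ C : Finset X, ↑C ⊆ A ∧ IsCover ε A C ∧ C.card ≤ n := by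
  refine ⟨fun h ↦ ?_, fun ⟨C, hCA, hC, hn⟩ ↦ ?_⟩
  · obtain ⟨C, hCA, hfin, hC, hcard⟩ :=
      exists_set_encard_eq_coveringNumber (h.trans_lt (ENat.natCast_lt_top n)).ne
    lift C to Finset X using hfin
    rw [← hcard, encard_coe_eq_coe_finsetCard, Nat.cast_le] at h
    exact ⟨C, hCA, hC, h⟩
  · refine (hC.coveringNumber_le_encard hCA).trans ?_
    rwa [encard_coe_eq_coe_finsetCard, Nat.cast_le]

theorem externalCoveringNumber_le_natCast_iff {n : ℕ} :
    externalCoveringNumber ε A ≤ n ↔ ∃ C : Finset X, IsCover ε A C ∧ C.card ≤ n := by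
  refine ⟨fun h ↦ ?_, fun ⟨C, hC, hn⟩ ↦ ?_⟩
  · rw [externalCoveringNumber, iInf_subtype'] at h
    have : Nonempty {C // IsCover ε A C} := ⟨A, .rfl⟩
    obtain ⟨⟨C, hC⟩, hcard⟩ := ENat.exists_eq_iInf fun C : {C // IsCover ε A C} ↦ C.1.encard
    rw [← hcard] at h
    lift C to Finset X using finite_of_encard_le_coe h
    rw [encard_coe_eq_coe_finsetCard, Nat.cast_le] at h
    exact ⟨C, hC, h⟩
  · refine hC.externalCoveringNumber_le_encard.trans ?_
    rwa [encard_coe_eq_coe_finsetCard, Nat.cast_le]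

theorem coveringNumber_le_coveringNumber_image {f : X → Y}
    (hf : ∀ x ∈ A, ∀ y ∈ A, edist (f x) (f y) ≤ η → edist x y ≤ ε) :
    coveringNumber ε A ≤ coveringNumber η (f '' A) := by
  refine le_iInf₂ fun C hCA ↦ le_iInf fun hC ↦ ?_
  obtain ⟨D, hDA, hinj, rfl⟩ := SurjOn.exists_subset_injOn_image_eq hCA
  rw [hinj.encard_image]
  refine IsCover.coveringNumber_le_encard hDA fun x hx ↦ ?_
  obtain ⟨_, ⟨y, hy, rfl⟩, hxy⟩ := hC (mem_image_of_mem f hx)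
  exact ⟨y, hy, hf x hx y (hDA hy) hxy⟩

theorem coveringNumber_le_mul_of_forall_inter_closedEBall {m n : ℕ} (hA : coveringNumber δ A ≤ m)
    (hball : ∀ x ∈ A, coveringNumber ε (A ∩ closedEBall x δ) ≤ n) :
    coveringNumber ε A ≤ ((m * n : ℕ) : ℕ∞) := by
  classical
  obtain ⟨C, hCA, hC, hm⟩ := coveringNumber_le_natCast_iff.1 hA
  choose! D hDsub hD hn using fun x hx ↦ coveringNumber_le_natCast_iff.1 (hball x hx)
  refine coveringNumber_le_natCast_iff.2 ⟨C.biUnion D, ?_, fun x hx ↦ ?_, ?_⟩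
  · simp only [Finset.coe_biUnion, iUnion_subset_iff]
    exact fun x hx y hy ↦ (hDsub x (hCA hx) hy).1
  · obtain ⟨c, hcC, hxc⟩ := hC hx
    obtain ⟨y, hy, hxy⟩ := hD c (hCA hcC) ⟨hx, mem_closedEBall.2 hxc⟩
    exact ⟨y, Finset.mem_coe.2 (Finset.mem_biUnion.2 ⟨c, hcC, hy⟩), hxy⟩
  · exact (Finset.card_biUnion_le_card_mul C D n fun x hx ↦ hn x (hCA hx)).trans
      (Nat.mul_le_mul_right n hm)

theorem externalCoveringNumber_pi_le_pow {ι : Type*} [Fintype ι] {s : ι → Set X} {n : ℕ}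
    (hs : ∀ i, externalCoveringNumber ε (s i) ≤ n) :
    externalCoveringNumber ε (univ.pi s) ≤ ((n ^ Fintype.card ι : ℕ) : ℕ∞) := by
  classical
  choose C hC hn using fun i ↦ externalCoveringNumber_le_natCast_iff.1 (hs i)
  refine externalCoveringNumber_le_natCast_iff.2 ⟨Fintype.piFinset C, fun x hx ↦ ?_, ?_⟩
  · choose y hyC hxy using fun i ↦ hC i (hx i (mem_univ i))
    exact ⟨y, Finset.mem_coe.2 (Fintype.mem_piFinset.2 hyC), edist_pi_le_iff.2 hxy⟩
  · rw [Fintype.card_piFinset]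
    exact Finset.prod_le_pow_card _ _ n fun i _ ↦ hn i

theorem externalCoveringNumber_Icc_le (hε : 0 < ε) (a : ℝ) (n : ℕ) :
    externalCoveringNumber ε (Icc a (a + n * ε)) ≤ ((n + 1 : ℕ) : ℕ∞) := by
  have hε' : (0 : ℝ) < ε := hε
  refine externalCoveringNumber_le_natCast_iff.2
    ⟨(Finset.range (n + 1)).image fun j : ℕ ↦ a + j * ε, fun x ⟨hax, hxn⟩ ↦ ?_,
      Finset.card_image_le.trans_eq (Finset.card_range _)⟩
  have hnonneg : 0 ≤ (x - a) / ε := div_nonneg (sub_nonneg.2 hax) hε'.le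
  have hle : (x - a) / ε ≤ n := (div_le_iff₀ hε').2 (by linarith)
  set j := ⌊(x - a) / ε⌋₊
  have hj : j * ε ≤ x - a := (le_div_iff₀ hε').1 (Nat.floor_le hnonneg)
  have hj' : x - a < (j + 1) * ε := (div_lt_iff₀ hε').1 (Nat.lt_floor_add_one _)
  refine ⟨a + j * ε, ?_, ?_⟩
  · refine Finset.mem_coe.2 (Finset.mem_image_of_mem _ (Finset.mem_range_succ_iff.2 ?_))
    exact Nat.floor_le_of_le hle
  · change edist x (a + j * ε) ≤ ε
    rw [edist_le_coe, ← NNReal.coe_le_coe, coe_nndist, Real.dist_eq, abs_le]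
    constructor <;> linarith

end CoveringNumbers

section DistanceFunction

theorem convexOn_infDist {E : Type*} [SeminormedAddCommGroup E] [NormedSpace ℝ E] {K : Set E}
    (hK : Convex ℝ K) (hne : K.Nonempty) : ConvexOn ℝ univ (infDist · K) := by
  refine ⟨convex_univ, fun x _ y _ a b ha hb hab ↦ le_of_forall_pos_lt_add fun ε hε ↦ ?_⟩
  obtain ⟨p, hp, hxp⟩ := (infDist_lt_iff hne).1 (lt_add_of_pos_right (infDist x K) hε)
  obtain ⟨q, hq, hyq⟩ := (infDist_lt_iff hne).1 (lt_add_of_pos_right (infDist y K) hε)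
  calc infDist (a • x + b • y) K
      ≤ dist (a • x + b • y) (a • p + b • q) := infDist_le_dist_of_mem (hK hp hq ha hb hab)
    _ ≤ dist (a • x) (a • p) + dist (b • y) (b • q) := dist_add_add_le _ _ _ _
    _ = a * dist x p + b * dist y q := by
        rw [dist_smul₀, dist_smul₀, Real.norm_of_nonneg ha, Real.norm_of_nonneg hb]
    _ < a * (infDist x K + ε) + b * (infDist y K + ε) := by
        rcases ha.eq_or_lt with rfl | ha
        · obtain rfl : b = 1 := by linarith
          linarith
        · have := mul_lt_mul_of_pos_left hxp ha
          have := mul_le_mul_of_nonneg_left hyq.le hb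
          linarith
    _ = a • infDist x K + b • infDist y K + ε := by
        rw [smul_eq_mul, smul_eq_mul]
        linear_combination ε * hab

theorem exists_nonneg_norm_add_smul_eq {W : Type*} [NormedAddCommGroup W] [NormedSpace ℝ W]
    {x v : W} {r : ℝ} (hx : ‖x‖ ≤ r) (hv : v ≠ 0) : ∃ t : ℝ, 0 ≤ t ∧ ‖x + t • v‖ = r := by
  have hv' : 0 < ‖v‖ := norm_pos_iff.2 hv
  have hr : 0 ≤ r := (norm_nonneg x).trans hx
  have hfar : r ≤ ‖x + ((r + ‖x‖) / ‖v‖) • v‖ := by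
    have := norm_sub_le_norm_add (((r + ‖x‖) / ‖v‖) • v) x
    rw [norm_smul, Real.norm_of_nonneg (by positivity), div_mul_cancel₀ _ hv'.ne',
      add_comm _ x] at this
    linarith
  obtain ⟨t, ht, hxt⟩ := intermediate_value_Icc (f := fun t : ℝ ↦ ‖x + t • v‖)
    (by positivity : 0 ≤ (r + ‖x‖) / ‖v‖) (by fun_prop) ⟨by simpa using hx, hfar⟩
  exact ⟨t, ht.1, hxt⟩

/-- `S` meets every ray that starts in `B`. It is through points of such a set `S` that the convex
subsets of `B` are compared. -/
def MeetsRaysFrom {E : Type*} [AddCommGroup E] [Module ℝ E] (S B : Set E) : Prop :=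
  ∀ x ∈ B, ∀ v : E, v ≠ 0 → ∃ t : ℝ, 0 ≤ t ∧ x + t • v ∈ S

section Recovery

variable {E : Type*} [NormedAddCommGroup E] [NormedSpace ℝ E] [ProperSpace E] {S B : Set E} {ε : ℝ}

theorem infDist_le_of_forall_infDist_le_add {K L : Set E} {x : E} (hK : Convex ℝ K)
    (hKc : IsClosed K) (hKne : K.Nonempty) (hS : MeetsRaysFrom S B) (hxB : x ∈ B) (hxL : x ∈ L)
    (hε : 0 ≤ ε) (hKL : ∀ z ∈ S, infDist z K ≤ infDist z L + ε) : infDist x K ≤ ε := by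
  -- Let `q` be the point of `K` nearest to `x` and `z = x + t (x - q) ∈ S`. By convexity,
  -- `infDist · K` grows at least at unit speed along the ray from `q` through `x`, so it is at
  -- least `dist z q` at `z`, whereas `infDist z L ≤ dist z x = dist z q - dist x q`.
  obtain ⟨q, hqK, hxq⟩ := hKc.exists_infDist_eq_dist hKne x
  rcases eq_or_ne x q with rfl | hne
  · rwa [infDist_zero_of_mem hqK]
  obtain ⟨t, ht, hzS⟩ := hS x hxB (x - q) (sub_ne_zero.2 hne)
  set z := x + t • (x - q) with hz
  have ht' : 0 < 1 + t := by linarith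
  have hx_combo : x = (t / (1 + t)) • q + (1 / (1 + t)) • z := by
    have : (1 + t) • x = t • q + z := by rw [hz]; module
    rw [div_eq_inv_mul, mul_smul, one_div, ← smul_add, ← this, inv_smul_smul₀ ht'.ne']
  have hconv : infDist x K ≤ (t / (1 + t)) * infDist q K + (1 / (1 + t)) * infDist z K := by
    conv_lhs => rw [hx_combo]
    exact (convexOn_infDist hK hKne).2 (mem_univ _) (mem_univ _) (by positivity) (by positivity)
      (by field_simp; ring)
  have hzK : (1 + t) * infDist x K ≤ infDist z K := by
    rw [infDist_zero_of_mem hqK, mul_zero, zero_add, one_div, ← div_eq_inv_mul,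
      le_div_iff₀ ht'] at hconv
    linarith
  have hzL : infDist z L ≤ t * infDist x K :=
    calc infDist z L ≤ dist z x := infDist_le_dist_of_mem hxL
      _ = t * infDist x K := by
        rw [hxq, hz, dist_self_add_left, norm_smul, Real.norm_of_nonneg ht, dist_eq_norm]
  linarith [hKL z hzS]

theorem dist_convexBody_le_of_forall_abs_infDist_sub_le {K L : ConvexBody E}
    (hS : MeetsRaysFrom S B) (hK : (K : Set E) ⊆ B) (hL : (L : Set E) ⊆ B) (hε : 0 ≤ ε)
    (hKL : ∀ z ∈ S, |infDist z K - infDist z L| ≤ ε) : dist K L ≤ ε := by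
  refine hausdorffDist_le_of_infDist hε (fun x hx ↦ ?_) fun x hx ↦ ?_
  · exact infDist_le_of_forall_infDist_le_add L.convex L.isClosed L.nonempty hS (hK hx) hx hε
      fun z hz ↦ by linarith [neg_le_of_abs_le (hKL z hz)]
  · exact infDist_le_of_forall_infDist_le_add K.convex K.isClosed K.nonempty hS (hL hx) hx hε
      fun z hz ↦ by linarith [le_of_abs_le (hKL z hz)]

end Recovery

theorem abs_infDist_sub_infDist_le_dist {E : Type*} [SeminormedAddCommGroup E] [NormedSpace ℝ E]
    (K L : ConvexBody E) (y : E) : |infDist y K - infDist y L| ≤ dist K L := by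
  have hLK := infDist_le_infDist_add_hausdorffDist (x := y)
    (ConvexBody.hausdorffEDist_ne_top (K := K) (L := L))
  have hKL := infDist_le_infDist_add_hausdorffDist (x := y)
    (ConvexBody.hausdorffEDist_ne_top (K := L) (L := K))
  rw [ConvexBody.hausdorffDist_coe] at hLK hKL
  rw [dist_comm] at hKL
  exact abs_sub_le_iff.2 ⟨by linarith, by linarith⟩

/-- `N` is a net for `S` of mesh `h` such that each point of `S` is even a convex combination of
points of `N` within distance `h`. -/
def IsHullNet {E : Type*} [SeminormedAddCommGroup E] [NormedSpace ℝ E] (h : ℝ) (S N : Set E) :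
    Prop :=
  ∀ z ∈ S, z ∈ convexHull ℝ (N ∩ closedBall z h)

section InnerProduct

variable {E : Type*} [NormedAddCommGroup E] [InnerProductSpace ℝ E]

theorem norm_add_le_norm_add_inner_div_add {u : E} (hu : u ≠ 0) (v : E) :
    ‖u + v‖ ≤ ‖u‖ + inner ℝ u v / ‖u‖ + ‖v‖ ^ 2 / (2 * ‖u‖) := by
  have : 0 < ‖u‖ := norm_pos_iff.2 hu
  have hsq : ‖u‖ + inner ℝ u v / ‖u‖ + ‖v‖ ^ 2 / (2 * ‖u‖) =
      (‖u‖ ^ 2 + ‖u + v‖ ^ 2) / (2 * ‖u‖) := by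
    rw [norm_add_sq_real]
    field_simp
    ring
  rw [hsq, le_div_iff₀ (by positivity)]
  linarith [two_mul_le_add_sq ‖u‖ ‖u + v‖]

theorem infDist_le_infDist_add_of_mem_convexHull {K L T : Set E} {z : E} {c h r : ℝ}
    (hK : Convex ℝ K) (hKne : K.Nonempty) (hLne : L.Nonempty) (hr : 0 < r) (hrz : r ≤ infDist z L)
    (hz : z ∈ convexHull ℝ (T ∩ closedBall z h)) (hT : ∀ y ∈ T, infDist y K ≤ infDist y L + c) :
    infDist z K ≤ infDist z L + (c + h ^ 2 / (2 * r)) := by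
  -- For `p ∈ L`, the function `y ↦ infDist y K - ⟪z - p, y⟫ / ‖z - p‖` is convex, so its value at
  -- `z` is at most its value at some `y ∈ T`. There `infDist y K ≤ dist y p + c`, and `dist y p`
  -- exceeds its linearization at `z` by at most `dist y z ^ 2 / (2 * dist z p)`.
  rw [← sub_le_iff_le_add, le_infDist hLne]
  intro p hp
  have hrp : r ≤ ‖z - p‖ := hrz.trans ((infDist_le_dist_of_mem hp).trans_eq (dist_eq_norm _ _))
  have hzp : z - p ≠ 0 := norm_pos_iff.1 (hr.trans_le hrp)
  set w := ‖z - p‖⁻¹ • (z - p) with hw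
  have hconv : ConvexOn ℝ univ fun y ↦ infDist y K - inner ℝ w y :=
    (convexOn_infDist hK hKne).sub ((innerₗ E w).concaveOn convex_univ)
  obtain ⟨y, ⟨hyT, hyz⟩, hle⟩ := hconv.exists_ge_of_mem_convexHull (subset_univ _) hz
  have hwyz : inner ℝ w y - inner ℝ w z = inner ℝ (z - p) (y - z) / ‖z - p‖ := by
    rw [← inner_sub_right, hw, real_inner_smul_left, div_eq_inv_mul]
  have hyz' : ‖y - z‖ ≤ h := mem_closedBall_iff_norm.1 hyz
  have hyp : dist y p ≤ ‖z - p‖ + inner ℝ (z - p) (y - z) / ‖z - p‖ + h ^ 2 / (2 * r) :=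
    calc dist y p = ‖(z - p) + (y - z)‖ := by rw [dist_eq_norm]; congr 1; abel
      _ ≤ ‖z - p‖ + inner ℝ (z - p) (y - z) / ‖z - p‖ + ‖y - z‖ ^ 2 / (2 * ‖z - p‖) :=
        norm_add_le_norm_add_inner_div_add hzp _
      _ ≤ _ := by gcongr
  rw [dist_eq_norm z p]
  linarith [hT y hyT, infDist_le_dist_of_mem (x := y) hp]

end InnerProduct

end DistanceFunction

section LocalCovering

variable {E : Type*} [NormedAddCommGroup E]

/-- The family of nonempty compact convex subsets of the closed ball of radius `R` around `0`, as a
set in the metric space of convex bodies with the Hausdorff distance. -/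
def convexBodiesIn (E : Type*) [NormedAddCommGroup E] [NormedSpace ℝ E] (R : ℝ) :
    Set (ConvexBody E) :=
  {K | (K : Set E) ⊆ closedBall 0 R}

theorem dist_le_two_mul_of_mem_convexBodiesIn [NormedSpace ℝ E] {R : ℝ} {K L : ConvexBody E}
    (hK : K ∈ convexBodiesIn E R) (hL : L ∈ convexBodiesIn E R) : dist K L ≤ 2 * R := by
  have hdist : ∀ x ∈ (K : Set E), ∀ y ∈ (L : Set E), dist x y ≤ 2 * R := fun x hx y hy ↦
    ((dist_triangle_right x y 0).trans (add_le_add (hK hx) (hL hy))).trans_eq (two_mul R).symm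
  obtain ⟨x₀, hx₀⟩ := K.nonempty
  obtain ⟨y₀, hy₀⟩ := L.nonempty
  exact hausdorffDist_le_of_mem_dist (dist_nonneg.trans (hdist x₀ hx₀ y₀ hy₀))
    (fun x hx ↦ ⟨y₀, hy₀, hdist x hx y₀ hy₀⟩)
    fun y hy ↦ ⟨x₀, hx₀, (dist_comm y x₀).trans_le (hdist x₀ hx₀ y hy)⟩

theorem le_infDist_of_add_le_norm {L : Set E} {R r : ℝ} {z : E} (hL : L ⊆ closedBall 0 R)
    (hLne : L.Nonempty) (hz : R + r ≤ ‖z‖) : r ≤ infDist z L := by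
  refine (le_infDist hLne).2 fun p hp ↦ ?_
  have hp' : ‖p‖ ≤ R := mem_closedBall_zero_iff.1 (hL hp)
  rw [dist_eq_norm]
  linarith [norm_sub_norm_le z p]

/-- The distances from the points of `N` to `K`. In the sup metric, these vectors encode the bodies
near a given one. -/
noncomputable def distanceProfile [NormedSpace ℝ E] (N : Set E) (K : ConvexBody E) : N → ℝ :=
  fun y ↦ infDist (y : E) K

theorem image_distanceProfile_closedEBall_subset [NormedSpace ℝ E] (N : Set E) (K₀ : ConvexBody E)
    (δ : ℝ≥0) :
    distanceProfile N '' closedEBall K₀ δ ⊆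
      univ.pi fun y ↦ Icc (distanceProfile N K₀ y - δ) (distanceProfile N K₀ y + δ) := by
  simp_rw [← Real.closedBall_eq_Icc]
  rintro _ ⟨K, hK, rfl⟩ y -
  rw [mem_closedEBall, edist_le_coe, ← NNReal.coe_le_coe, coe_nndist] at hK
  exact (abs_infDist_sub_infDist_le_dist K K₀ y).trans hK

variable [InnerProductSpace ℝ E] [ProperSpace E] {S N : Set E} {R r h : ℝ}

theorem dist_le_of_forall_mem_hullNet {K L : ConvexBody E} {c : ℝ} (hK : K ∈ convexBodiesIn E R)
    (hL : L ∈ convexBodiesIn E R) (hS : MeetsRaysFrom S (closedBall 0 R)) (hr : 0 < r)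
    (hSr : ∀ z ∈ S, R + r ≤ ‖z‖) (hN : IsHullNet h S N) (hc : 0 ≤ c)
    (hKL : ∀ y ∈ N, |infDist y K - infDist y L| ≤ c) : dist K L ≤ c + h ^ 2 / (2 * r) := by
  refine dist_convexBody_le_of_forall_abs_infDist_sub_le hS hK hL (by positivity) fun z hz ↦ ?_
  have hKL' := infDist_le_infDist_add_of_mem_convexHull (c := c) K.convex K.nonempty L.nonempty hr
    (le_infDist_of_add_le_norm hL L.nonempty (hSr z hz)) (hN z hz)
    fun y hy ↦ by linarith [le_of_abs_le (hKL y hy)]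
  have hLK' := infDist_le_infDist_add_of_mem_convexHull (c := c) L.convex L.nonempty K.nonempty hr
    (le_infDist_of_add_le_norm hK K.nonempty (hSr z hz)) (hN z hz)
    fun y hy ↦ by linarith [neg_le_of_abs_le (hKL y hy)]
  exact abs_sub_le_iff.2 ⟨by linarith, by linarith⟩

theorem dist_le_of_dist_distanceProfile_le [Fintype N] {K L : ConvexBody E} {c : ℝ}
    (hK : K ∈ convexBodiesIn E R) (hL : L ∈ convexBodiesIn E R)
    (hS : MeetsRaysFrom S (closedBall 0 R)) (hr : 0 < r) (hSr : ∀ z ∈ S, R + r ≤ ‖z‖)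
    (hN : IsHullNet h S N) (hKL : dist (distanceProfile N K) (distanceProfile N L) ≤ c) :
    dist K L ≤ c + h ^ 2 / (2 * r) :=
  dist_le_of_forall_mem_hullNet hK hL hS hr hSr hN (dist_nonneg.trans hKL) fun y hy ↦
    (dist_le_pi_dist (distanceProfile N K) (distanceProfile N L) ⟨y, hy⟩).trans hKL

theorem coveringNumber_convexBodiesIn_inter_closedEBall_le {δ : ℝ≥0} {n : ℕ}
    (hS : MeetsRaysFrom S (closedBall 0 R)) (hr : 0 < r) (hSr : ∀ z ∈ S, R + r ≤ ‖z‖)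
    (hN : IsHullNet h S N) (hδ : 0 < δ) (hhδ : h ^ 2 / (2 * r) ≤ δ / 8) (hn : N.encard ≤ n)
    (K₀ : ConvexBody E) :
    coveringNumber (δ / 4) (convexBodiesIn E R ∩ closedEBall K₀ δ) ≤ ((33 ^ n : ℕ) : ℕ∞) := by
  -- Near `K₀`, each coordinate of the profile ranges over an interval of length `2 * δ`, which `33`
  -- points cover at scale `δ / 16`. Bodies with the same code have profiles within `δ / 8`, hence
  -- are within `δ / 8 + h ^ 2 / (2 * r)` of each other.
  have := (finite_of_encard_le_coe hn).fintype
  have hcard : Fintype.card N ≤ n := by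
    rwa [← Nat.cast_le (α := ℕ∞), ← toFinset_card, ← encard_coe_eq_coe_finsetCard, coe_toFinset]
  have hinv : ∀ K ∈ convexBodiesIn E R ∩ closedEBall K₀ δ,
      ∀ L ∈ convexBodiesIn E R ∩ closedEBall K₀ δ,
      edist (distanceProfile N K) (distanceProfile N L) ≤ (2 * (δ / 16) : ℝ≥0) →
      edist K L ≤ (δ / 4 : ℝ≥0) := by
    intro K hK L hL hKL
    rw [edist_le_coe, ← NNReal.coe_le_coe, coe_nndist] at hKL ⊢
    have hdist := dist_le_of_dist_distanceProfile_le hK.1 hL.1 hS hr hSr hN hKL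
    push_cast at hdist ⊢
    linarith
  have hIcc (a : ℝ) : externalCoveringNumber (δ / 16) (Icc (a - δ) (a + δ)) ≤ (33 : ℕ) := by
    convert externalCoveringNumber_Icc_le (by positivity : 0 < δ / 16) (a - δ) 32 using 3
    push_cast
    ring
  calc coveringNumber (δ / 4) (convexBodiesIn E R ∩ closedEBall K₀ δ)
      ≤ coveringNumber (2 * (δ / 16))
          (distanceProfile N '' (convexBodiesIn E R ∩ closedEBall K₀ δ)) :=
        coveringNumber_le_coveringNumber_image hinv
    _ ≤ externalCoveringNumber (δ / 16)
          (distanceProfile N '' (convexBodiesIn E R ∩ closedEBall K₀ δ)) :=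
        coveringNumber_two_mul_le_externalCoveringNumber _ _
    _ ≤ externalCoveringNumber (δ / 16) _ := externalCoveringNumber_mono_set
        ((image_mono inter_subset_right).trans (image_distanceProfile_closedEBall_subset N K₀ δ))
    _ ≤ ((33 ^ Fintype.card N : ℕ) : ℕ∞) := externalCoveringNumber_pi_le_pow fun y ↦ hIcc _
    _ ≤ ((33 ^ n : ℕ) : ℕ∞) := Nat.cast_le.2 (Nat.pow_le_pow_right (by norm_num) hcard)

end LocalCovering

section Cube

theorem exists_norm_apply_eq_pi_norm {ι : Type*} [Fintype ι] [Nonempty ι] {F : ι → Type*}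
    [∀ i, SeminormedAddCommGroup (F i)] (f : ∀ i, F i) : ∃ i, ‖f i‖ = ‖f‖ := by
  obtain ⟨i, hi⟩ := Finite.exists_max fun i ↦ ‖f i‖
  exact ⟨i, (norm_le_pi_norm f i).antisymm ((pi_norm_le_iff_of_nonneg (norm_nonneg _)).2 hi)⟩

/-- The boundary of the cube `[-r, r] ^ ι`, as a sphere for the sup norm `‖WithLp.ofLp z‖`. -/
def cubeSurface (ι : Type*) [Fintype ι] (r : ℝ) : Set (EuclideanSpace ℝ ι) :=
  {z | ‖WithLp.ofLp z‖ = r}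

/-- The points that divide `[-r, r]` into `m` equal parts, endpoints included. -/
def axisGrid (r : ℝ) (m : ℕ) : Set ℝ :=
  range fun g : Fin (m + 1) ↦ -r + g * (2 * r / m)

/-- The points of the grid of mesh `2 * r / m` in `[-r, r] ^ ι` that lie on the boundary. -/
def cubeSurfaceGrid (ι : Type*) (r : ℝ) (m : ℕ) : Set (EuclideanSpace ℝ ι) :=
  {y | (∀ j, y j ∈ axisGrid r m) ∧ ∃ i, |y i| = r}

theorem mem_axisGrid_of_abs_eq {a r : ℝ} {m : ℕ} (hm : m ≠ 0) (ha : |a| = r) :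
    a ∈ axisGrid r m := by
  rcases eq_or_eq_neg_of_abs_eq ha with rfl | rfl
  · refine ⟨Fin.last m, ?_⟩
    simp only [Fin.val_last]
    field_simp
    ring
  · exact ⟨0, by simp⟩

theorem mem_convexHull_axisGrid_inter_closedBall {a r : ℝ} {m : ℕ} (hr : 0 < r) (hm : m ≠ 0)
    (ha : |a| ≤ r) : a ∈ convexHull ℝ (axisGrid r m ∩ closedBall a (2 * r / m)) := by
  have hm' : (0 : ℝ) < m := by positivity
  set s := 2 * r / m with hs
  have hs0 : 0 < s := by positivity
  set x := (a + r) / s with hx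
  have hax : a = -r + x * s := by rw [hx, div_mul_cancel₀ _ hs0.ne']; ring
  have hx0 : 0 ≤ x := div_nonneg (by linarith [neg_le_of_abs_le ha]) hs0.le
  have hxm : x ≤ m := by
    rw [hx, div_le_iff₀ hs0, hs, mul_div_cancel₀ _ hm'.ne']
    linarith [le_of_abs_le ha]
  have hlo : (⌊x⌋₊ : ℝ) * s ≤ x * s := by gcongr; exact Nat.floor_le hx0
  have hhi : x * s ≤ (⌈x⌉₊ : ℝ) * s := by gcongr; exact Nat.le_ceil x
  have hlo' : x * s ≤ (⌊x⌋₊ + 1) * s := by gcongr; exact (Nat.lt_floor_add_one x).le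
  have hhi' : (⌈x⌉₊ : ℝ) * s ≤ (x + 1) * s := by gcongr; exact (Nat.ceil_lt_add_one hx0).le
  have hmem_segment : a ∈ segment ℝ (-r + ⌊x⌋₊ * s) (-r + ⌈x⌉₊ * s) := by
    rw [segment_eq_Icc (by linarith)]
    constructor <;> linarith
  have hfloor : -r + ⌊x⌋₊ * s ∈ axisGrid r m ∩ closedBall a s := by
    refine ⟨⟨⟨⌊x⌋₊, Nat.lt_succ_of_le (Nat.floor_le_of_le hxm)⟩, rfl⟩, ?_⟩
    rw [mem_closedBall, Real.dist_eq, abs_le]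
    constructor <;> linarith
  have hceil : -r + ⌈x⌉₊ * s ∈ axisGrid r m ∩ closedBall a s := by
    refine ⟨⟨⟨⌈x⌉₊, Nat.lt_succ_of_le (Nat.ceil_le.2 hxm)⟩, rfl⟩, ?_⟩
    rw [mem_closedBall, Real.dist_eq, abs_le]
    constructor <;> linarith
  exact segment_subset_convexHull hfloor hceil hmem_segment

section Fintype

variable {ι : Type*} [Fintype ι] {r : ℝ} {z : EuclideanSpace ℝ ι}

theorem norm_ofLp_le_norm (z : EuclideanSpace ℝ ι) : ‖WithLp.ofLp z‖ ≤ ‖z‖ :=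
  (pi_norm_le_iff_of_nonneg (norm_nonneg z)).2 (PiLp.norm_apply_le z)

theorem le_norm_of_mem_cubeSurface (hz : z ∈ cubeSurface ι r) : r ≤ ‖z‖ :=
  hz.symm.trans_le (norm_ofLp_le_norm z)

theorem meetsRaysFrom_cubeSurface {R : ℝ} (hRr : R ≤ r) :
    MeetsRaysFrom (cubeSurface ι r) (closedBall 0 R) := by
  intro x hx v hv
  have hx' : ‖WithLp.ofLp x‖ ≤ r :=
    (norm_ofLp_le_norm x).trans ((mem_closedBall_zero_iff.1 hx).trans hRr)
  exact exists_nonneg_norm_add_smul_eq hx' ((WithLp.ofLp_eq_zero 2).not.2 hv)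

theorem dist_le_sqrt_card_mul {y : EuclideanSpace ℝ ι} {h : ℝ} (hh : 0 ≤ h)
    (hyz : ∀ j, dist (y j) (z j) ≤ h) : dist y z ≤ √(Fintype.card ι) * h := by
  rw [EuclideanSpace.dist_eq, Real.sqrt_le_left (by positivity), mul_pow,
    Real.sq_sqrt (by positivity)]
  calc ∑ j, dist (y j) (z j) ^ 2 ≤ ∑ _j : ι, h ^ 2 := by gcongr with j; exact hyz j
    _ = Fintype.card ι * h ^ 2 := by rw [Finset.sum_const, Finset.card_univ, nsmul_eq_mul]

theorem isHullNet_cubeSurfaceGrid [Nonempty ι] {m : ℕ} (hr : 0 < r) (hm : m ≠ 0) :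
    IsHullNet (√(Fintype.card ι) * (2 * r / m)) (cubeSurface ι r) (cubeSurfaceGrid ι r m) := by
  classical
  intro z hz
  have hzr : ∀ j, |z j| ≤ r := fun j ↦ (norm_le_pi_norm (WithLp.ofLp z) j).trans_eq hz
  obtain ⟨i, hi⟩ := exists_norm_apply_eq_pi_norm (WithLp.ofLp z)
  have hzi : |z i| = r := hi.trans hz
  have hself : z i ∈ axisGrid r m ∩ closedBall (z i) (2 * r / m) :=
    ⟨mem_axisGrid_of_abs_eq hm hzi, mem_closedBall_self (by positivity)⟩
  let T : ι → Set ℝ :=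
    Function.update (fun j ↦ axisGrid r m ∩ closedBall (z j) (2 * r / m)) i {z i}
  have hT : WithLp.ofLp z ∈ convexHull ℝ (univ.pi T) := mem_convexHull_pi fun j _ ↦ by
    rcases eq_or_ne j i with rfl | hji
    · simp [T]
    · simpa only [T, Function.update_of_ne hji] using
        mem_convexHull_axisGrid_inter_closedBall hr hm (hzr j)
  have hT_subset : (WithLp.linearEquiv 2 ℝ (ι → ℝ)).symm '' univ.pi T ⊆
      cubeSurfaceGrid ι r m ∩ closedBall z (√(Fintype.card ι) * (2 * r / m)) := by
    rintro _ ⟨y, hy, rfl⟩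
    have hyi : y i = z i := by simpa [T] using hy i (mem_univ i)
    have hyj : ∀ j, y j ∈ axisGrid r m ∩ closedBall (z j) (2 * r / m) := fun j ↦ by
      rcases eq_or_ne j i with rfl | hji
      · rwa [hyi]
      · simpa only [T, Function.update_of_ne hji] using hy j (mem_univ j)
    exact ⟨⟨fun j ↦ (hyj j).1, i, (congrArg abs hyi).trans hzi⟩,
      dist_le_sqrt_card_mul (by positivity) fun j ↦ (hyj j).2⟩
  refine convexHull_mono hT_subset ?_
  rw [← LinearEquiv.coe_toLinearMap, ← LinearMap.image_convexHull]
  exact ⟨WithLp.ofLp z, hT, rfl⟩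

end Fintype

theorem encard_cubeSurfaceGrid_le (d m : ℕ) (r : ℝ) :
    (cubeSurfaceGrid (Fin (d + 1)) r m).encard ≤ ((2 * (d + 1) * (m + 1) ^ d : ℕ) : ℕ∞) := by
  let point (c : Fin (d + 1) × Bool × (Fin d → Fin (m + 1))) : EuclideanSpace ℝ (Fin (d + 1)) :=
    WithLp.toLp 2 (c.1.insertNth (bif c.2.1 then r else -r) fun j ↦ -r + c.2.2 j * (2 * r / m))
  have hsubset : cubeSurfaceGrid (Fin (d + 1)) r m ⊆ point '' univ := by
    rintro y ⟨hgrid, i, hi⟩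
    choose g hg using hgrid
    obtain ⟨b, hb⟩ : ∃ b : Bool, (bif b then r else -r) = y i := by
      rcases eq_or_eq_neg_of_abs_eq hi with h | h
      exacts [⟨true, h.symm⟩, ⟨false, h.symm⟩]
    refine ⟨(i, b, g ∘ i.succAbove), mem_univ _, congrArg (WithLp.toLp 2) ?_⟩
    exact Fin.insertNth_eq_iff.2 ⟨hb, funext fun j ↦ hg (i.succAbove j)⟩
  refine (encard_le_encard hsubset).trans ((encard_image_le _ _).trans_eq ?_)
  rw [encard_univ, ENat.card_eq_coe_fintype_card]
  simp only [Fintype.card_prod, Fintype.card_fin, Fintype.card_bool, Fintype.card_fun]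
  congr 1
  ring

end Cube

section Multiscale

/-- A factor `C` for which the covering number of the convex bodies in a ball of radius `R` of
`ℝ ^ (d + 1)` at scale `2 * R / 4 ^ k` is at most `33 ^ (C * 2 ^ (k * d))`. The boundary of the cube
`[-3 * R, 3 * R] ^ (d + 1)` has at most `C * 2 ^ (k * d)` points on the grid with
`6 * (d + 1) * 2 ^ k` steps per side. -/
def multiscaleFactor (d : ℕ) : ℕ :=
  2 * (d + 1) * (12 * (d + 1)) ^ d

theorem encard_cubeSurfaceGrid_le_multiscaleFactor_mul (d k : ℕ) (r : ℝ) :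
    (cubeSurfaceGrid (Fin (d + 1)) r (6 * (d + 1) * 2 ^ k)).encard ≤
      ((multiscaleFactor d * 2 ^ (k * d) : ℕ) : ℕ∞) := by
  refine (encard_cubeSurfaceGrid_le d _ r).trans (Nat.cast_le.2 ?_)
  have hone : 1 ≤ 6 * (d + 1) * 2 ^ k := Nat.one_le_iff_ne_zero.2 (by positivity)
  calc 2 * (d + 1) * (6 * (d + 1) * 2 ^ k + 1) ^ d
      ≤ 2 * (d + 1) * (12 * (d + 1) * 2 ^ k) ^ d := by gcongr; linarith
    _ = multiscaleFactor d * 2 ^ (k * d) := by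
        rw [multiscaleFactor, mul_pow _ (2 ^ k), pow_mul]
        ring

theorem cubeSurfaceGrid_mesh_sq_div_le {R : ℝ} (hR : 0 < R) (d k : ℕ) :
    (√(Fintype.card (Fin (d + 1))) * (2 * (3 * R) / (6 * (d + 1) * 2 ^ k : ℕ))) ^ 2 /
      (2 * (2 * R)) ≤ 2 * R / 4 ^ k / 8 := by
  have hsq : √(Fintype.card (Fin (d + 1))) ^ 2 = d + 1 := by
    rw [Real.sq_sqrt (by positivity), Fintype.card_fin, Nat.cast_succ]
  have hfour : (4 : ℝ) ^ k = (2 ^ k) ^ 2 := by rw [pow_right_comm]; norm_num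
  calc (√(Fintype.card (Fin (d + 1))) * (2 * (3 * R) / (6 * (d + 1) * 2 ^ k : ℕ))) ^ 2 /
        (2 * (2 * R))
      = 2 * R / 4 ^ k / 8 * (1 / (d + 1)) := by
        rw [mul_pow, hsq, hfour]
        push_cast
        field_simp
        norm_num
    _ ≤ 2 * R / 4 ^ k / 8 := mul_le_of_le_one_right (by positivity)
        ((div_le_one (by positivity)).2 (by linarith [d.cast_nonneg (α := ℝ)]))

variable {d : ℕ} {R : ℝ≥0}

theorem coveringNumber_convexBodiesIn_inter_closedEBall_scale_le (hR : 0 < R) (k : ℕ)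
    (K₀ : ConvexBody (EuclideanSpace ℝ (Fin (d + 1)))) :
    coveringNumber (2 * R / 4 ^ (k + 1)) (convexBodiesIn (EuclideanSpace ℝ (Fin (d + 1))) R ∩
      closedEBall K₀ (2 * R / 4 ^ k : ℝ≥0)) ≤
      ((33 ^ (multiscaleFactor d * 2 ^ (k * d)) : ℕ) : ℕ∞) := by
  have hR' : (0 : ℝ) < R := hR
  have hrays : MeetsRaysFrom (cubeSurface (Fin (d + 1)) (3 * R)) (closedBall 0 R) :=
    meetsRaysFrom_cubeSurface (by linarith)
  have hfar : ∀ z ∈ cubeSurface (Fin (d + 1)) (3 * R), (R : ℝ) + 2 * R ≤ ‖z‖ := fun z hz ↦ by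
    linarith [le_norm_of_mem_cubeSurface hz]
  have hnet := isHullNet_cubeSurfaceGrid (ι := Fin (d + 1)) (by positivity : (0 : ℝ) < 3 * R)
    (by positivity : 6 * (d + 1) * 2 ^ k ≠ 0)
  have hmesh := cubeSurfaceGrid_mesh_sq_div_le hR' d k
  rw [pow_succ, ← div_div]
  exact coveringNumber_convexBodiesIn_inter_closedEBall_le hrays (by positivity) hfar hnet
    (by positivity) (by exact_mod_cast hmesh) (encard_cubeSurfaceGrid_le_multiscaleFactor_mul d k _)
    K₀

theorem coveringNumber_convexBodiesIn_scale_le (hd : 1 ≤ d) (hR : 0 < R) (k : ℕ) :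
    coveringNumber (2 * R / 4 ^ k) (convexBodiesIn (EuclideanSpace ℝ (Fin (d + 1))) R) ≤
      ((33 ^ (multiscaleFactor d * 2 ^ (k * d)) : ℕ) : ℕ∞) := by
  induction k with
  | zero =>
    rw [pow_zero, div_one]
    refine (coveringNumber_le_one_of_ediam_le (ediam_le fun K hK L hL ↦ ?_)).trans
      (Nat.one_le_cast.2 (Nat.one_le_pow _ _ (by norm_num)))
    rw [edist_le_coe]
    exact dist_le_two_mul_of_mem_convexBodiesIn hK hL
  | succ k ih =>
    refine (coveringNumber_le_mul_of_forall_inter_closedEBall ih fun K₀ _ ↦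
      coveringNumber_convexBodiesIn_inter_closedEBall_scale_le hR k K₀).trans (Nat.cast_le.2 ?_)
    rw [← pow_add]
    refine Nat.pow_le_pow_right (by norm_num) ?_
    calc multiscaleFactor d * 2 ^ (k * d) + multiscaleFactor d * 2 ^ (k * d)
        = multiscaleFactor d * (2 ^ (k * d) * 2 ^ 1) := by ring
      _ ≤ multiscaleFactor d * (2 ^ (k * d) * 2 ^ d) := by gcongr; norm_num
      _ = multiscaleFactor d * 2 ^ ((k + 1) * d) := by rw [← pow_add, add_one_mul]

end Multiscale

section Conclusion

theorem exists_four_pow_scale {x : ℝ} (hx : 1 ≤ x) (d : ℕ) :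
    ∃ k : ℕ, 2 * x ≤ 4 ^ k ∧ (2 : ℝ) ^ (k * d) ≤ (8 * x) ^ ((d : ℝ) / 2) := by
  obtain ⟨k, hkx, hxk⟩ := exists_nat_pow_near (by linarith : 1 ≤ 2 * x) (by norm_num : (1 : ℝ) < 4)
  refine ⟨k + 1, hxk.le, ?_⟩
  have hsqrt : (2 : ℝ) ^ (k + 1) ≤ √(8 * x) := by
    refine Real.le_sqrt_of_sq_le ?_
    calc ((2 : ℝ) ^ (k + 1)) ^ 2 = 4 * 4 ^ k := by rw [← pow_mul, mul_comm, pow_mul]; norm_num; ring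
      _ ≤ 8 * x := by linarith
  calc (2 : ℝ) ^ ((k + 1) * d) = (2 ^ (k + 1)) ^ d := pow_mul _ _ _
    _ ≤ √(8 * x) ^ d := by gcongr
    _ = (8 * x) ^ ((d : ℝ) / 2) := by
        rw [Real.sqrt_eq_rpow, ← Real.rpow_mul_natCast (by positivity), one_div_mul_eq_div]

theorem exists_fin_hausdorffEDist_le_of_coveringNumber_le {E : Type*} [NormedAddCommGroup E]
    [NormedSpace ℝ E] [ProperSpace E] {R : ℝ} {δ : ℝ≥0} {N : ℕ}
    (hN : coveringNumber δ (convexBodiesIn E R) ≤ N) :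
    ∃ n ≤ N + 1, ∃ V : Fin n → Set E, ∀ K : Set E, IsClosed K → Convex ℝ K → K ⊆ closedBall 0 R →
      ∃ i, hausdorffEDist K (V i) ≤ δ := by
  obtain ⟨C, -, hC, hcard⟩ := coveringNumber_le_natCast_iff.1 hN
  refine ⟨C.card + 1, by gcongr, Fin.cons ∅ fun i ↦ ((C.equivFin.symm i : ConvexBody E) : Set E),
    fun K hKc hK hKR ↦ ?_⟩
  rcases K.eq_empty_or_nonempty with rfl | hKne
  · exact ⟨0, by simp⟩
  · let K' : ConvexBody E := ⟨K, hK, (isCompact_closedBall 0 R).of_isClosed_subset hKc hKR, hKne⟩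
    obtain ⟨L, hL, hKL⟩ := hC (show K' ∈ convexBodiesIn E R from hKR)
    refine ⟨(C.equivFin ⟨L, hL⟩).succ, ?_⟩
    rw [Fin.cons_succ, Equiv.symm_apply_apply]
    exact (ConvexBody.hausdorffEDist_coe (K := K') (L := L)).trans_le hKL

theorem natCast_le_exp_log_mul_of_le_pow_add_one {a b n X : ℕ} (hab : a < b) (hX : X ≠ 0)
    (hn : n ≤ a ^ X + 1) : (n : ℝ) ≤ exp (log b * X) := by
  have hb : (0 : ℝ) < b := Nat.cast_pos.2 hab.pos
  have hnb : n ≤ b ^ X := hn.trans (Nat.succ_le_of_lt (Nat.pow_lt_pow_left hab hX))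
  rw [Real.exp_mul, Real.exp_log hb, Real.rpow_natCast]
  exact_mod_cast hnb

end Conclusion

/-- **Theorem (Bronshtein).** For every `d ≥ 1` there are `c_d, ε₀ > 0` such that for every
`R > 0` and `0 < ε ≤ ε₀ R`, the closed convex subsets of the closed ball of radius `R` in
`ℝ^{d+1}` admit an ε-cover in the Hausdorff distance of cardinality at most
`exp(c_d (R/ε)^{d/2})`. -/
theorem bronshtein_convex_sets_cover (d : ℕ) (hd : 1 ≤ d) :
    ∃ c > (0:ℝ), ∃ ε₀ > (0:ℝ), ∀ R > (0:ℝ), ∀ ε : ℝ, 0 < ε → ε ≤ ε₀ * R →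
      ∃ (n : ℕ) (V : Fin n → Set (EuclideanSpace ℝ (Fin (d+1)))),
        (n : ℝ) ≤ Real.exp (c * (R / ε) ^ ((d : ℝ) / 2)) ∧
        ∀ K : Set (EuclideanSpace ℝ (Fin (d+1))),
          IsClosed K → Convex ℝ K → K ⊆ Metric.closedBall 0 R →
          ∃ i, EMetric.hausdorffEdist K (V i) ≤ ENNReal.ofReal ε := by
  have hfactor : 0 < multiscaleFactor d := by unfold multiscaleFactor; positivity
  have : 0 < log 34 := Real.log_pos (by norm_num)
  refine ⟨log 34 * (multiscaleFactor d * 8 ^ ((d : ℝ) / 2)), by positivity, 1, one_pos,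
    fun R hR ε hε hεR ↦ ?_⟩
  lift R to ℝ≥0 using hR.le
  lift ε to ℝ≥0 using hε.le
  obtain ⟨k, hk, hkd⟩ := exists_four_pow_scale (x := R / ε)
    ((one_le_div hε).2 (by simpa using hεR)) d
  have hscale : 2 * R / 4 ^ k ≤ ε := by
    rw [← mul_div_assoc, div_le_iff₀ hε, ← div_le_iff₀' (by positivity)] at hk
    exact_mod_cast hk
  obtain ⟨n, hn, V, hV⟩ := exists_fin_hausdorffEDist_le_of_coveringNumber_le
    ((coveringNumber_anti hscale).trans (coveringNumber_convexBodiesIn_scale_le hd hR k))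
  refine ⟨n, V, (natCast_le_exp_log_mul_of_le_pow_add_one (b := 34) (by norm_num)
    (by positivity) hn).trans ?_, ?_⟩
  · rw [mul_assoc, mul_assoc, ← Real.mul_rpow (by positivity) (by positivity)]
    push_cast
    gcongr
  · rw [ENNReal.ofReal_coe_nnreal]
    exact hV
end

section
/- Let p ≥ 1 be a real number, k ≥ 1 an integer, 0 < ε ≤ 1, and A ≥ 1 an integer. Define δ_i := ε^{ p ((p+1)/(p+2))^{i−1} } for 1 ≤ i ≤ A+1, set u := δ_{A+1}, and assume u ≤ 2^{−2(p+1)²(p+2)}. Define a_i := ε^{1/k} · ε^{ −p (p+1)^{i−2}/(p+2)^{i−1} } for 1 ≤ i ≤ A, and ζ_i := √( ε^{1/k} δ_{i+1} / (δ_i a_i) ) for 1 ≤ i ≤ A. Then for every real γ ≥ 1, ∑_{α=1}^A ζ_α^γ ≤ 2 · u^{ γ / (2(p+1)²) }. -/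
open Real

/-!
The radicand defining `ζ i` is a power of `ε`, and it simplifies to
`ζ i = δ (i + 1) ^ (1 / (2 (p + 1) ^ 2))`. Each `δ i` is the power of `δ (i + 1)` with exponent
`R = (p + 2) / (p + 1)`, so with `x = u ^ (γ / (2 (p + 1) ^ 2))` the sum is
`∑_{j < A} x ^ (R ^ j)`. Bernoulli's inequality `R ^ j ≥ 1 + j (R - 1)` dominates it by a geometric
series of first term `x` and ratio `x ^ (R - 1) = x ^ (1 / (p + 1))`, and the smallness of `u` makes
this ratio at most `1 / 2`.
-/

theorem rpow_pow_le_mul_rpow_pow {x R : ℝ} (hx₀ : 0 < x) (hx₁ : x ≤ 1) (hR : -1 ≤ R) (n : ℕ) :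
    x ^ (R ^ n) ≤ x * (x ^ (R - 1)) ^ n :=
  calc
    x ^ (R ^ n) ≤ x ^ (1 + n * (R - 1)) :=
      rpow_le_rpow_of_exponent_ge hx₀ hx₁ (one_add_mul_sub_le_pow hR n)
    _ = x * (x ^ (R - 1)) ^ n := by
      rw [rpow_add hx₀, rpow_one, mul_comm (n : ℝ), rpow_mul_natCast hx₀.le]

theorem sum_range_rpow_pow_le {x R : ℝ} (hx₀ : 0 < x) (hx₁ : x < 1) (hR : 1 < R) (n : ℕ) :
    ∑ j ∈ Finset.range n, x ^ (R ^ j) ≤ x * (1 - x ^ (R - 1))⁻¹ := by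
  have ratio_nonneg : 0 ≤ x ^ (R - 1) := rpow_nonneg hx₀.le _
  have ratio_lt_one : x ^ (R - 1) < 1 := rpow_lt_one hx₀.le hx₁ (sub_pos.2 hR)
  calc
    ∑ j ∈ Finset.range n, x ^ (R ^ j) ≤ ∑ j ∈ Finset.range n, x * (x ^ (R - 1)) ^ j :=
      Finset.sum_le_sum fun j _ ↦ rpow_pow_le_mul_rpow_pow hx₀ hx₁.le (by linarith) j
    _ = x * ∑ j ∈ Finset.range n, (x ^ (R - 1)) ^ j := (Finset.mul_sum ..).symm
    _ ≤ x * (1 - x ^ (R - 1))⁻¹ := by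
      rw [← tsum_geometric_of_lt_one ratio_nonneg ratio_lt_one]
      gcongr
      exact (summable_geometric_of_lt_one ratio_nonneg ratio_lt_one).sum_le_tsum _
        fun j _ ↦ pow_nonneg ratio_nonneg j

theorem sum_range_rpow_pow_le_two_mul {x R : ℝ} (hx : 0 < x) (hR : 1 < R)
    (hratio : x ^ (R - 1) ≤ 2⁻¹) (n : ℕ) : ∑ j ∈ Finset.range n, x ^ (R ^ j) ≤ 2 * x := by
  have x_lt_one : x < 1 := by
    by_contra! h
    linarith [one_le_rpow h (sub_pos.2 hR).le]
  calc
    ∑ j ∈ Finset.range n, x ^ (R ^ j) ≤ x * (1 - x ^ (R - 1))⁻¹ :=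
      sum_range_rpow_pow_le hx x_lt_one hR n
    _ ≤ x * 2 := by
      gcongr
      exact inv_le_of_inv_le₀ two_pos (by linarith)
    _ = 2 * x := mul_comm x 2

theorem sum_Icc_one_sub_eq_sum_range {M : Type*} [AddCommMonoid M] (f : ℕ → M) (n : ℕ) :
    ∑ i ∈ Finset.Icc 1 n, f (n - i) = ∑ j ∈ Finset.range n, f j := by
  rw [← Finset.Ico_add_one_right_eq_Icc, Finset.sum_Ico_reflect f 1 le_rfl, Nat.sub_self,
    Nat.add_sub_cancel, Finset.range_eq_Ico]

theorem rpow_le_inv_of_le_rpow_neg {b u m t : ℝ} (hb : 1 ≤ b) (hu₀ : 0 ≤ u) (hu : u ≤ b ^ (-m))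
    (ht : 0 ≤ t) (hmt : 1 ≤ m * t) : u ^ t ≤ b⁻¹ :=
  calc
    u ^ t ≤ (b ^ (-m)) ^ t := rpow_le_rpow hu₀ hu ht
    _ = b ^ (-(m * t)) := by rw [← rpow_mul (zero_le_one.trans hb), neg_mul]
    _ ≤ b ^ (-1 : ℝ) := rpow_le_rpow_of_exponent_le hb (neg_le_neg hmt)
    _ = b⁻¹ := rpow_neg_one b

theorem delta_eq_delta_rpow_inv_pow {p r ε : ℝ} {δ : ℕ → ℝ} (hr : 0 < r) (hε : 0 ≤ ε)
    (hδ : ∀ i, δ i = ε ^ (p * r ^ ((i : ℝ) - 1))) {m n : ℕ} (hmn : m ≤ n) :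
    δ m = δ n ^ (r⁻¹ ^ (n - m)) := by
  rw [hδ m, hδ n, ← rpow_mul hε, mul_assoc, ← rpow_natCast, inv_rpow hr.le, ← rpow_neg hr.le,
    ← rpow_add hr, Nat.cast_sub hmn]
  ring_nf

theorem zeta_exponent_identity {p : ℝ} (hp : -1 < p) (t : ℝ) :
    ((p + 1) / (p + 2)) ^ t - ((p + 1) / (p + 2)) ^ (t - 1) + (p + 1) ^ (t - 2) / (p + 2) ^ (t - 1)
      = ((p + 1) / (p + 2)) ^ t / (p + 1) ^ 2 := by
  have hp₁ : 0 < p + 1 := by linarith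
  have hp₂ : 0 < p + 2 := by linarith
  rw [rpow_sub_one (div_pos hp₁ hp₂).ne', div_rpow hp₁.le hp₂.le, rpow_sub_one hp₂.ne',
    rpow_sub hp₁, rpow_two]
  field_simp
  ring

theorem zeta_eq_delta_rpow {p ε c : ℝ} {δ a ζ : ℕ → ℝ} (hp : -1 < p) (hε : 0 < ε) (hc : 0 < c)
    (hδ : ∀ i, δ i = ε ^ (p * ((p + 1) / (p + 2)) ^ ((i : ℝ) - 1)))
    (ha : ∀ i, a i = c * ε ^ (-(p * (p + 1) ^ ((i : ℝ) - 2) / (p + 2) ^ ((i : ℝ) - 1))))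
    (hζ : ∀ i, ζ i = √(c * δ (i + 1) / (δ i * a i))) (i : ℕ) :
    ζ i = δ (i + 1) ^ (1 / (2 * (p + 1) ^ 2)) := by
  have radicand_eq : c * δ (i + 1) / (δ i * a i) = δ (i + 1) ^ (1 / (p + 1) ^ 2) := by
    rw [ha, mul_left_comm, mul_div_mul_left _ _ hc.ne', hδ, hδ, ← rpow_add hε, ← rpow_sub hε,
      ← rpow_mul hε.le, Nat.cast_add_one, add_sub_cancel_right]
    congr 1
    linear_combination p * zeta_exponent_identity hp i
  have delta_nonneg : 0 ≤ δ (i + 1) := hδ (i + 1) ▸ rpow_nonneg hε.le _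
  rw [hζ, radicand_eq, sqrt_eq_rpow, ← rpow_mul delta_nonneg, one_div_mul_one_div_rev]

theorem zeta_rpow_eq_delta_rpow_rpow_pow {p ε c : ℝ} {δ a ζ : ℕ → ℝ} (hp : -1 < p) (hε : 0 < ε)
    (hc : 0 < c) (hδ : ∀ i, δ i = ε ^ (p * ((p + 1) / (p + 2)) ^ ((i : ℝ) - 1)))
    (ha : ∀ i, a i = c * ε ^ (-(p * (p + 1) ^ ((i : ℝ) - 2) / (p + 2) ^ ((i : ℝ) - 1))))
    (hζ : ∀ i, ζ i = √(c * δ (i + 1) / (δ i * a i))) {i n : ℕ} (hin : i ≤ n) (γ : ℝ) :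
    ζ i ^ γ = (δ (n + 1) ^ (γ / (2 * (p + 1) ^ 2))) ^ (((p + 2) / (p + 1)) ^ (n - i)) := by
  have ratio_pos : 0 < (p + 1) / (p + 2) := div_pos (by linarith) (by linarith)
  have delta_nonneg : 0 ≤ δ (n + 1) := hδ (n + 1) ▸ rpow_nonneg hε.le _
  rw [zeta_eq_delta_rpow hp hε hc hδ ha hζ,
    delta_eq_delta_rpow_inv_pow ratio_pos hε.le hδ (Nat.add_le_add_right hin 1),
    Nat.add_sub_add_right, inv_div]
  simp only [← rpow_mul delta_nonneg]
  ring_nf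

theorem zeta_sum_bound_general {p ε c u γ : ℝ} {δ a ζ : ℕ → ℝ} {A : ℕ} (hp : -1 < p) (hε : 0 < ε)
    (hc : 0 < c) (hδ : ∀ i, δ i = ε ^ (p * ((p + 1) / (p + 2)) ^ ((i : ℝ) - 1)))
    (hu : u = δ (A + 1)) (hu_le : u ≤ (2 : ℝ) ^ (-(2 * (p + 1) ^ 2 * (p + 2))))
    (ha : ∀ i, a i = c * ε ^ (-(p * (p + 1) ^ ((i : ℝ) - 2) / (p + 2) ^ ((i : ℝ) - 1))))
    (hζ : ∀ i, ζ i = √(c * δ (i + 1) / (δ i * a i))) (hγ : (p + 1) / (p + 2) ≤ γ) :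
    ∑ α ∈ Finset.Icc 1 A, ζ α ^ γ ≤ 2 * u ^ (γ / (2 * (p + 1) ^ 2)) := by
  have hp₁ : 0 < p + 1 := by linarith
  have hp₂ : 0 < p + 2 := by linarith
  have u_pos : 0 < u := by rw [hu, hδ]; exact rpow_pos_of_pos hε _
  set R : ℝ := (p + 2) / (p + 1) with hR
  set x : ℝ := u ^ (γ / (2 * (p + 1) ^ 2)) with hx
  have R_sub_one : R - 1 = 1 / (p + 1) := by rw [hR]; field_simp; ring
  have one_lt_R : 1 < R := (one_lt_div hp₁).2 (by linarith)
  have ratio_le_half : x ^ (R - 1) ≤ 2⁻¹ := by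
    have hγ₀ : 0 < γ := (div_pos hp₁ hp₂).trans_le hγ
    rw [hx, ← rpow_mul u_pos.le, R_sub_one]
    refine rpow_le_inv_of_le_rpow_neg one_le_two u_pos.le hu_le (by positivity) ?_
    rw [div_le_iff₀ hp₂] at hγ
    field_simp
    linarith
  calc
    ∑ α ∈ Finset.Icc 1 A, ζ α ^ γ = ∑ α ∈ Finset.Icc 1 A, x ^ (R ^ (A - α)) := by
      refine Finset.sum_congr rfl fun α hα ↦ ?_
      rw [zeta_rpow_eq_delta_rpow_rpow_pow hp hε hc hδ ha hζ (Finset.mem_Icc.1 hα).2, ← hu]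
    _ = ∑ j ∈ Finset.range A, x ^ (R ^ j) := sum_Icc_one_sub_eq_sum_range (fun j ↦ x ^ (R ^ j)) A
    _ ≤ 2 * x :=
      sum_range_rpow_pow_le_two_mul (rpow_pos_of_pos u_pos _) one_lt_R ratio_le_half A

/-- **Lemma (geometric-sum bound for the ζ sequence).** With
`δ_i = ε^{p((p+1)/(p+2))^{i-1}}`, `u = δ_{A+1} ≤ 2^{-2(p+1)²(p+2)}`,
`a_i = ε^{1/k} ε^{-p(p+1)^{i-2}/(p+2)^{i-1}}` and `ζ_i = √(ε^{1/k} δ_{i+1}/(δ_i a_i))`,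
one has `∑_{α=1}^A ζ_α^γ ≤ 2 u^{γ/(2(p+1)²)}` for every `γ ≥ 1`. -/
theorem zeta_sum_bound (p : ℝ) (hp : 1 ≤ p) (k A : ℕ) (hk : 1 ≤ k) (hA : 1 ≤ A)
    (ε : ℝ) (hε : 0 < ε) (hε1 : ε ≤ 1)
    (δ : ℕ → ℝ) (hδ : ∀ i, δ i = ε ^ (p * ((p + 1) / (p + 2)) ^ ((i : ℝ) - 1)))
    (u : ℝ) (hu : u = δ (A + 1))
    (hu2 : u ≤ (2 : ℝ) ^ (-(2 * (p + 1) ^ 2 * (p + 2))))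
    (a : ℕ → ℝ)
    (ha : ∀ i, a i = ε ^ (1 / (k : ℝ)) *
      ε ^ (-(p * (p + 1) ^ ((i : ℝ) - 2) / (p + 2) ^ ((i : ℝ) - 1))))
    (ζ : ℕ → ℝ)
    (hζ : ∀ i, ζ i = Real.sqrt (ε ^ (1 / (k : ℝ)) * δ (i + 1) / (δ i * a i))) :
    ∀ γ : ℝ, 1 ≤ γ →
      ∑ α ∈ Finset.Icc 1 A, ζ α ^ γ ≤ 2 * u ^ (γ / (2 * (p + 1) ^ 2)) :=
  fun γ hγ ↦ zeta_sum_bound_general (by linarith) hε (rpow_pos_of_pos hε _) hδ hu hu2 ha hζ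
    (((div_le_one (by linarith)).2 (by linarith)).trans hγ)
end
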